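/- Fix positive reals p₋₁, p₀, p₁ with p₁ = p₋₁ (zero drift), let P(1) = p₋₁ + p₀ + p₁ and P″(1) = 2p₋₁, and let f_{n,h} denote the total weight of Motzkin walks of length n whose height equals h. Then, with σ = √(P″(1)/P(1)), the height rescaled by √n converges in distribution to the half-normal law H(σ): for every real x ≥ 0, lim_{n→∞} (Σ_{h ≤ x√n} f_{n,h})/P(1)ⁿ = ∫_0^x √(2/(πσ²)) · exp(−t²/(2σ²)) dt. -/

import Mathlib

open scoped BigOperators Classical

/-- Value of a step encoded by `Fin 3`: `0 ↦ -1`, `1 ↦ 0`, `2 ↦ +1`. -/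
def stepVal (s : Fin 3) : ℤ := (s : ℤ) - 1

/-- Weight of a single step: `p₋₁` for `-1`, `p₀` for `0`, `p₁` for `+1`. -/
def stepWeight (pm p0 p1 : ℝ) (s : Fin 3) : ℝ :=
  if s = 0 then pm else if s = 1 then p0 else p1

/-- Weight of a Motzkin walk (product of its step weights). -/
def walkWeight (pm p0 p1 : ℝ) {n : ℕ} (w : Fin n → Fin 3) : ℝ :=
  ∏ i, stepWeight pm p0 p1 (w i)

/-- Partial sum `ω_j` of the walk `w`. -/
def psum {n : ℕ} (w : Fin n → Fin 3) (j : ℕ) : ℤ :=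
  ∑ i ∈ Finset.univ.filter (fun i : Fin n => (i : ℕ) < j), stepVal (w i)

/-- Total weight of Motzkin bridges of length `n`. -/
noncomputable def bridgeW (pm p0 p1 : ℝ) (n : ℕ) : ℝ :=
  ∑ w ∈ Finset.univ.filter (fun w : Fin n → Fin 3 => psum w n = 0),
    walkWeight pm p0 p1 w

/-- Number of returns to zero of a walk of length `n`. -/
def retZero {n : ℕ} (w : Fin n → Fin 3) : ℕ :=
  ((Finset.Icc 1 n).filter (fun j => psum w j = 0)).card

/-- Total weight of walks of length `n` with exactly `k` returns to zero. -/
noncomputable def walkRetW (pm p0 p1 : ℝ) (n k : ℕ) : ℝ :=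
  ∑ w ∈ Finset.univ.filter (fun w : Fin n → Fin 3 => retZero w = k),
    walkWeight pm p0 p1 w

/-- Number of sign changes of a walk of length `n`. -/
def signChanges {n : ℕ} (w : Fin n → Fin 3) : ℕ :=
  (((Finset.range (n+1)) ×ˢ (Finset.range (n+1))).filter
    (fun p => p.1 < p.2 ∧ psum w p.1 * psum w p.2 < 0 ∧
      ∀ l ∈ Finset.Ioo p.1 p.2, psum w l = 0)).card

/-- Total weight of bridges of length `n` with exactly `k` sign changes. -/
noncomputable def bridgeSignW (pm p0 p1 : ℝ) (n k : ℕ) : ℝ :=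
  ∑ w ∈ Finset.univ.filter
      (fun w : Fin n → Fin 3 => psum w n = 0 ∧ signChanges w = k),
    walkWeight pm p0 p1 w

/-- Total weight of positive excursions of length `n`. -/
noncomputable def posExcW (pm p0 p1 : ℝ) (n : ℕ) : ℝ :=
  ∑ w ∈ Finset.univ.filter
      (fun w : Fin n → Fin 3 => psum w n = 0 ∧ ∀ j ∈ Finset.range (n+1), 0 ≤ psum w j),
    walkWeight pm p0 p1 w

/-- Total weight of negative excursions of length `n`. -/
noncomputable def negExcW (pm p0 p1 : ℝ) (n : ℕ) : ℝ :=
  ∑ w ∈ Finset.univ.filter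
      (fun w : Fin n → Fin 3 => psum w n = 0 ∧ ∀ j ∈ Finset.range (n+1), psum w j ≤ 0),
    walkWeight pm p0 p1 w

/-- A positive bridge: a bridge whose last nonzero partial sum is positive. -/
def IsPosBridge {n : ℕ} (w : Fin n → Fin 3) : Prop :=
  psum w n = 0 ∧ ∃ j ∈ Finset.range (n+1),
    0 < psum w j ∧ ∀ l ∈ Finset.Ioc j n, psum w l = 0

/-- A negative bridge: a bridge whose last nonzero partial sum is negative. -/
def IsNegBridge {n : ℕ} (w : Fin n → Fin 3) : Prop :=
  psum w n = 0 ∧ ∃ j ∈ Finset.range (n+1),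
    psum w j < 0 ∧ ∀ l ∈ Finset.Ioc j n, psum w l = 0

instance {n : ℕ} (w : Fin n → Fin 3) : Decidable (IsPosBridge w) := by
  unfold IsPosBridge; infer_instance

instance {n : ℕ} (w : Fin n → Fin 3) : Decidable (IsNegBridge w) := by
  unfold IsNegBridge; infer_instance

/-- Total weight of positive bridges of length `n` with `k` sign changes. -/
noncomputable def posBridgeSignW (pm p0 p1 : ℝ) (n k : ℕ) : ℝ :=
  ∑ w ∈ Finset.univ.filter
      (fun w : Fin n → Fin 3 => IsPosBridge w ∧ signChanges w = k),
    walkWeight pm p0 p1 w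

/-- Total weight of negative bridges of length `n` with `k` sign changes. -/
noncomputable def negBridgeSignW (pm p0 p1 : ℝ) (n k : ℕ) : ℝ :=
  ∑ w ∈ Finset.univ.filter
      (fun w : Fin n → Fin 3 => IsNegBridge w ∧ signChanges w = k),
    walkWeight pm p0 p1 w

/-- Total weight of walks of length `n` with `k` sign changes. -/
noncomputable def walkSignW (pm p0 p1 : ℝ) (n k : ℕ) : ℝ :=
  ∑ w ∈ Finset.univ.filter (fun w : Fin n → Fin 3 => signChanges w = k),
    walkWeight pm p0 p1 w

/-- Height of a walk of length `n` (as a natural number; it is `max_j ω_j ≥ 0`). -/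
def height {n : ℕ} (w : Fin n → Fin 3) : ℕ :=
  (Finset.range (n+1)).sup (fun j => (psum w j).toNat)

/-- Total weight of walks of length `n` of height exactly `h`. -/
noncomputable def heightW (pm p0 p1 : ℝ) (n h : ℕ) : ℝ :=
  ∑ w ∈ Finset.univ.filter (fun w : Fin n → Fin 3 => height w = h),
    walkWeight pm p0 p1 w

theorem psum_zero {n : ℕ} (w : Fin n → Fin 3) : psum w 0 = 0 := by
  simp [psum]

theorem psum_cons_succ {n : ℕ} (s : Fin 3) (w : Fin n → Fin 3) (j : ℕ) :
    psum (Fin.cons s w : Fin (n + 1) → Fin 3) (j + 1) = stepVal s + psum w j := by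
  simp [psum, Finset.sum_filter, Fin.sum_univ_succ]

theorem psum_self {n : ℕ} (w : Fin n → Fin 3) : psum w n = ∑ i, stepVal (w i) := by
  simp [psum]

theorem walkWeight_cons (pm p0 p1 : ℝ) {n : ℕ} (s : Fin 3) (w : Fin n → Fin 3) :
    walkWeight pm p0 p1 (Fin.cons s w : Fin (n + 1) → Fin 3) =
      stepWeight pm p0 p1 s * walkWeight pm p0 p1 w := by
  simp [walkWeight, Fin.prod_univ_succ]

/-- Decomposition of a weighted sum over walks according to the first step. -/
theorem sum_walkWeight_succ (pm p0 p1 : ℝ) {n : ℕ} (φ : (Fin (n + 1) → Fin 3) → ℝ) :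
    ∑ w, walkWeight pm p0 p1 w * φ w =
      pm * ∑ w : Fin n → Fin 3, walkWeight pm p0 p1 w * φ (Fin.cons 0 w) +
      p0 * ∑ w : Fin n → Fin 3, walkWeight pm p0 p1 w * φ (Fin.cons 1 w) +
      p1 * ∑ w : Fin n → Fin 3, walkWeight pm p0 p1 w * φ (Fin.cons 2 w) := by
  calc ∑ w, walkWeight pm p0 p1 w * φ w
      = ∑ s : Fin 3, ∑ w : Fin n → Fin 3,
          walkWeight pm p0 p1 (Fin.cons s w : Fin (n + 1) → Fin 3) * φ (Fin.cons s w) := by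
        rw [← (Fin.consEquiv fun _ : Fin (n + 1) => Fin 3).sum_comp, Fintype.sum_prod_type]
        rfl
    _ = ∑ s : Fin 3, stepWeight pm p0 p1 s *
          ∑ w : Fin n → Fin 3, walkWeight pm p0 p1 w * φ (Fin.cons s w) := by
        simp only [walkWeight_cons, mul_assoc, ← Finset.mul_sum]
    _ = _ := by
        rw [Fin.sum_univ_three]
        rfl

theorem forall_psum_cons_le_iff {n : ℕ} (s : Fin 3) (w : Fin n → Fin 3) {h : ℤ} (hh : 0 ≤ h) :
    (∀ j ≤ n + 1, psum (Fin.cons s w : Fin (n + 1) → Fin 3) j ≤ h) ↔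
      ∀ j ≤ n, psum w j ≤ h - stepVal s := by
  constructor
  · intro H j hj
    have := H (j + 1) (by omega)
    rw [psum_cons_succ] at this
    omega
  · intro H j hj
    rcases j with _ | j
    · rwa [psum_zero]
    · have := H j (by omega)
      rw [psum_cons_succ]
      omega

/-- **Reflection principle**: for symmetric step weights, the total weight of the walks staying
weakly below `h` is that of the walks ending in `[-(h + 1), h]`. -/
theorem sum_walkWeight_forall_psum_le (p p0 : ℝ) (n : ℕ) {h : ℤ} (hh : -1 ≤ h) :
    ∑ w : Fin n → Fin 3, walkWeight p p0 p w * (if ∀ j ≤ n, psum w j ≤ h then 1 else 0) =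
      ∑ w : Fin n → Fin 3,
        walkWeight p p0 p w * (if -(h + 1) ≤ psum w n ∧ psum w n ≤ h then 1 else 0) := by
  induction n generalizing h with
  | zero =>
    refine Finset.sum_congr rfl fun w _ => ?_
    congr 1
    refine if_congr ?_ rfl rfl
    simp only [Nat.le_zero, forall_eq, psum_zero]
    omega
  | succ n ih =>
    rcases eq_or_lt_of_le hh with rfl | hh
    · refine Finset.sum_congr rfl fun w _ => ?_
      congr 1
      refine if_congr ⟨fun H => ?_, fun H => by omega⟩ rfl rfl
      have := H 0 (Nat.zero_le _)
      rw [psum_zero] at this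
      omega
    have h0 : 0 ≤ h := by omega
    have e0 : stepVal 0 = -1 := rfl
    have e1 : stepVal 1 = 0 := rfl
    have e2 : stepVal 2 = 1 := rfl
    rw [sum_walkWeight_succ, sum_walkWeight_succ]
    simp only [forall_psum_cons_le_iff _ _ h0, psum_cons_succ, e0, e1, e2]
    rw [ih (by omega), ih (by omega), ih (by omega)]
    simp only [Finset.mul_sum, ← Finset.sum_add_distrib]
    refine Finset.sum_congr rfl fun w _ => ?_
    generalize psum w n = k
    generalize walkWeight p p0 p w = c
    have key : ((if -(h - -1 + 1) ≤ k ∧ k ≤ h - -1 then 1 else 0) +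
        (if -(h - 1 + 1) ≤ k ∧ k ≤ h - 1 then 1 else 0) : ℝ) =
        (if -(h + 1) ≤ -1 + k ∧ -1 + k ≤ h then 1 else 0) +
        (if -(h + 1) ≤ 1 + k ∧ 1 + k ≤ h then 1 else 0) := by
      split_ifs <;> first | omega | norm_num
    simp only [sub_zero, zero_add]
    linear_combination p * c * key

theorem height_le_iff {n : ℕ} (w : Fin n → Fin 3) (H : ℕ) :
    height w ≤ H ↔ ∀ j ≤ n, psum w j ≤ (H : ℤ) := by
  simp [height, Finset.sup_le_iff]

theorem sum_heightW (p p0 : ℝ) (n H : ℕ) :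
    ∑ h ∈ Finset.range (H + 1), heightW p p0 p n h =
      ∑ w : Fin n → Fin 3, walkWeight p p0 p w *
        (if -((H : ℤ) + 1) ≤ psum w n ∧ psum w n ≤ H then 1 else 0) := by
  rw [← sum_walkWeight_forall_psum_le p p0 n (by omega)]
  simp only [heightW, Finset.sum_filter]
  rw [Finset.sum_comm]
  refine Finset.sum_congr rfl fun w _ => ?_
  simp [← height_le_iff]

theorem stepWeight_nonneg {pm p0 p1 : ℝ} (hpm : 0 ≤ pm) (hp0 : 0 ≤ p0) (hp1 : 0 ≤ p1)
    (s : Fin 3) : 0 ≤ stepWeight pm p0 p1 s := by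
  unfold stepWeight
  split_ifs <;> assumption

theorem walkWeight_nonneg {pm p0 p1 : ℝ} (hpm : 0 ≤ pm) (hp0 : 0 ≤ p0) (hp1 : 0 ≤ p1) {n : ℕ}
    (w : Fin n → Fin 3) : 0 ≤ walkWeight pm p0 p1 w :=
  Finset.prod_nonneg fun _ _ => stepWeight_nonneg hpm hp0 hp1 _

theorem sum_walkWeight_ite_le {pm p0 p1 : ℝ} (hpm : 0 ≤ pm) (hp0 : 0 ≤ p0) (hp1 : 0 ≤ p1) {n : ℕ}
    {A B : (Fin n → Fin 3) → Prop} {_ : DecidablePred A} {_ : DecidablePred B}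
    (hAB : ∀ w, A w → B w) :
    (∑ w : Fin n → Fin 3, walkWeight pm p0 p1 w * if A w then 1 else 0) ≤
      ∑ w : Fin n → Fin 3, walkWeight pm p0 p1 w * if B w then 1 else 0 := by
  refine Finset.sum_le_sum fun w _ =>
    mul_le_mul_of_nonneg_left ?_ (walkWeight_nonneg hpm hp0 hp1 w)
  by_cases h : A w
  · simp [h, hAB w h]
  · rw [if_neg h]
    split_ifs <;> norm_num

theorem sum_walkWeight_mul_prod (pm p0 p1 : ℝ) (n : ℕ) (f : Fin 3 → ℂ) :
    ∑ w : Fin n → Fin 3, (walkWeight pm p0 p1 w : ℂ) * ∏ i, f (w i) =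
      (pm * f 0 + p0 * f 1 + p1 * f 2) ^ n := by
  have h := Finset.prod_univ_sum (fun _ : Fin n => (Finset.univ : Finset (Fin 3)))
    (fun _ s => (stepWeight pm p0 p1 s : ℂ) * f s)
  rw [Finset.prod_const, Finset.card_univ, Fintype.card_fin, Fintype.piFinset_univ] at h
  simp only [walkWeight, Complex.ofReal_prod, ← Finset.prod_mul_distrib]
  rw [← h, Fin.sum_univ_three]
  rfl

theorem sum_walkWeight (pm p0 p1 : ℝ) (n : ℕ) :
    ∑ w : Fin n → Fin 3, walkWeight pm p0 p1 w = (pm + p0 + p1) ^ n := by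
  have h := sum_walkWeight_mul_prod pm p0 p1 n 1
  simp only [Pi.one_apply, Finset.prod_const_one, mul_one] at h
  exact_mod_cast h

open MeasureTheory ProbabilityTheory Filter Topology

/-- Law of the endpoint, divided by `√n`, of a random walk of length `n` drawn with probability
proportional to its weight. -/
noncomputable def endpointLaw (pm p0 p1 : ℝ) (n : ℕ) : Measure ℝ :=
  ∑ w : Fin n → Fin 3, ENNReal.ofReal (walkWeight pm p0 p1 w / (pm + p0 + p1) ^ n) •
    Measure.dirac ((psum w n : ℝ) / √n)

theorem endpointLaw_apply {pm p0 p1 : ℝ} (hpm : 0 ≤ pm) (hp0 : 0 ≤ p0) (hp1 : 0 ≤ p1) (n : ℕ)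
    {s : Set ℝ} (hs : MeasurableSet s) :
    endpointLaw pm p0 p1 n s = ENNReal.ofReal ((∑ w : Fin n → Fin 3,
      walkWeight pm p0 p1 w * if (psum w n : ℝ) / √n ∈ s then 1 else 0) /
        (pm + p0 + p1) ^ n) := by
  have hP : 0 ≤ (pm + p0 + p1) ^ n := by positivity
  rw [Finset.sum_div, ENNReal.ofReal_sum_of_nonneg]
  · simp only [endpointLaw, Measure.finsetSum_apply, Measure.smul_apply,
      Measure.dirac_apply' _ hs, smul_eq_mul]
    refine Finset.sum_congr rfl fun w _ => ?_
    by_cases h : (psum w n : ℝ) / √n ∈ s <;> simp [h]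
  · intro w _
    have := walkWeight_nonneg hpm hp0 hp1 w
    positivity

theorem endpointLaw_real_apply {pm p0 p1 : ℝ} (hpm : 0 ≤ pm) (hp0 : 0 ≤ p0) (hp1 : 0 ≤ p1)
    (n : ℕ) {s : Set ℝ} (hs : MeasurableSet s) :
    (endpointLaw pm p0 p1 n).real s = (∑ w : Fin n → Fin 3,
      walkWeight pm p0 p1 w * if (psum w n : ℝ) / √n ∈ s then 1 else 0) /
        (pm + p0 + p1) ^ n := by
  rw [measureReal_def, endpointLaw_apply hpm hp0 hp1 n hs, ENNReal.toReal_ofReal]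
  refine div_nonneg (Finset.sum_nonneg fun w _ => mul_nonneg
    (walkWeight_nonneg hpm hp0 hp1 w) ?_) (by positivity)
  split_ifs <;> norm_num

theorem isProbabilityMeasure_endpointLaw {pm p0 p1 : ℝ} (hpm : 0 < pm) (hp0 : 0 ≤ p0)
    (hp1 : 0 ≤ p1) (n : ℕ) : IsProbabilityMeasure (endpointLaw pm p0 p1 n) := by
  constructor
  have : 0 < pm + p0 + p1 := by positivity
  rw [endpointLaw_apply hpm.le hp0 hp1 n MeasurableSet.univ]
  simp only [Set.mem_univ, if_true, mul_one, sum_walkWeight]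
  rw [div_self (by positivity), ENNReal.ofReal_one]

theorem charFun_endpointLaw {p p0 : ℝ} (hp : 0 < p) (hp0 : 0 ≤ p0) (n : ℕ) (t : ℝ) :
    charFun (endpointLaw p p0 p n) t =
      (1 + ((-(2 * p / (p + p0 + p)) * (1 - Real.cos (t / √n)) : ℝ) : ℂ)) ^ n := by
  have hP : 0 < p + p0 + p := by positivity
  have hP' : (p + p0 + p : ℂ) ≠ 0 := by exact_mod_cast hP.ne'
  rw [charFun_apply_real, endpointLaw, integral_finsetSum_measure
    fun w _ => (integrable_dirac (by simp)).smul_measure ENNReal.ofReal_ne_top]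
  simp only [integral_smul_measure, integral_dirac]
  have key : ∀ w : Fin n → Fin 3,
      (ENNReal.ofReal (walkWeight p p0 p w / (p + p0 + p) ^ n)).toReal •
        Complex.exp (t * ((psum w n : ℝ) / √n : ℝ) * Complex.I) =
      ((p + p0 + p : ℂ) ^ n)⁻¹ * ((walkWeight p p0 p w : ℂ) *
        ∏ i, Complex.exp (stepVal (w i) * ((t / √n : ℝ) * Complex.I))) := by
    intro w
    have := walkWeight_nonneg hp.le hp0 hp.le w
    rw [ENNReal.toReal_ofReal (by positivity), ← Complex.exp_sum, ← Finset.sum_mul, psum_self,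
      Complex.real_smul]
    push_cast
    rw [div_eq_inv_mul, mul_assoc]
    congr 3
    ring
  rw [Finset.sum_congr rfl fun w _ => key w, ← Finset.mul_sum,
    sum_walkWeight_mul_prod p p0 p n fun s => Complex.exp (stepVal s * ((t / √n : ℝ) * Complex.I)),
    ← inv_pow, ← mul_pow]
  congr 1
  have e0 : stepVal 0 = -1 := rfl
  have e1 : stepVal 1 = 0 := rfl
  have e2 : stepVal 2 = 1 := rfl
  simp only [e0, e1, e2]
  push_cast
  rw [Complex.cos]
  field_simp
  simp
  ring

theorem tendsto_nat_mul_one_sub_cos (t : ℝ) :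
    Tendsto (fun n : ℕ => n * (1 - Real.cos (t / √n))) atTop (𝓝 (t ^ 2 / 2)) := by
  have hlim : Tendsto (fun n : ℕ => t / √n / 2) atTop (𝓝 0) := by
    have := (tendsto_const_nhds (x := t)).div_atTop
      (Real.tendsto_sqrt_atTop.comp tendsto_natCast_atTop_atTop)
    simpa using this.div_const 2
  have h := (((Real.continuous_sinc.tendsto 0).comp hlim).pow 2).const_mul (t ^ 2 / 2)
  rw [Real.sinc_zero, one_pow, mul_one] at h
  refine h.congr' ?_
  filter_upwards [eventually_gt_atTop 0] with n hn
  have hn' : (0 : ℝ) < n := by exact_mod_cast hn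
  have hsin : ∀ y : ℝ, Real.sin y = y * Real.sinc y := by
    intro y
    rcases eq_or_ne y 0 with rfl | hy
    · simp
    · rw [Real.sinc_of_ne_zero hy]
      field_simp
  have hcos : 1 - Real.cos (t / √n) = 2 * Real.sin (t / √n / 2) ^ 2 := by
    rw [Real.sin_sq_eq_half_sub, mul_div_cancel₀ _ (two_ne_zero)]
    ring
  rw [hcos, hsin]
  simp only [Function.comp, mul_pow, div_pow, Real.sq_sqrt hn'.le]
  field_simp

theorem tendsto_charFun_endpointLaw {p p0 : ℝ} (hp : 0 < p) (hp0 : 0 ≤ p0) {v : NNReal}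
    (hv : (v : ℝ) = 2 * p / (p + p0 + p)) (t : ℝ) :
    Tendsto (fun n => charFun (endpointLaw p p0 p n) t) atTop
      (𝓝 (charFun (gaussianReal 0 v) t)) := by
  simp only [charFun_endpointLaw hp hp0, charFun_gaussianReal]
  refine Complex.tendsto_one_add_pow_exp_of_tendsto ?_
  have h := (Complex.continuous_ofReal.tendsto _).comp
    ((tendsto_nat_mul_one_sub_cos t).const_mul (-(v : ℝ)))
  convert! h using 2
  · simp only [Function.comp, hv]
    push_cast
    ring
  · push_cast
    ring

/-- Central limit theorem for the endpoint, in terms of measures of compact intervals. -/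
theorem tendsto_endpointLaw_Icc {p p0 : ℝ} (hp : 0 < p) (hp0 : 0 ≤ p0) {v : NNReal}
    (hv : (v : ℝ) = 2 * p / (p + p0 + p)) (a b : ℝ) :
    Tendsto (fun n => (endpointLaw p p0 p n).real (Set.Icc a b)) atTop
      (𝓝 ((gaussianReal 0 v).real (Set.Icc a b))) := by
  have hv0 : v ≠ 0 := by
    rw [← NNReal.coe_ne_zero, hv]
    positivity
  have hprob := fun n => isProbabilityMeasure_endpointLaw hp hp0 hp.le n
  let μs : ℕ → ProbabilityMeasure ℝ := fun n => ⟨endpointLaw p p0 p n, hprob n⟩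
  let μ : ProbabilityMeasure ℝ := ⟨gaussianReal 0 v, inferInstance⟩
  have hμ : Tendsto μs atTop (𝓝 μ) :=
    ProbabilityMeasure.tendsto_iff_tendsto_charFun.2 (tendsto_charFun_endpointLaw hp hp0 hv)
  have := nullSingletonClass_gaussianReal (μ := 0) hv0
  have hfr : (μ : Measure ℝ) (frontier (Set.Icc a b)) = 0 :=
    measure_mono_null (t := {a, b}) (by
      rcases le_or_gt a b with h | h
      · rw [frontier_Icc h]
      · simp [Set.Icc_eq_empty_of_lt h]) ((Set.toFinite {a, b}).measure_zero (gaussianReal 0 v))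
  exact (ENNReal.tendsto_toReal (measure_ne_top _ _)).comp
    (ProbabilityMeasure.tendsto_measure_of_null_frontier_of_tendsto' hμ hfr)

theorem gaussianReal_real_Icc {v : NNReal} (hv : v ≠ 0) {a b : ℝ} (hab : a ≤ b) :
    (gaussianReal 0 v).real (Set.Icc a b) = ∫ t in a..b, gaussianPDFReal 0 v t := by
  rw [measureReal_def, gaussianReal_apply_eq_integral _ hv, ENNReal.toReal_ofReal
    (integral_nonneg fun t => gaussianPDFReal_nonneg 0 v t), integral_Icc_eq_integral_Ioc,
    intervalIntegral.integral_of_le hab]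

theorem gaussianReal_real_Icc_neg {v : NNReal} (hv : v ≠ 0) {x : ℝ} (hx : 0 ≤ x) :
    (gaussianReal 0 v).real (Set.Icc (-x) x) =
      ∫ t in (0 : ℝ)..x, √(2 / (Real.pi * v)) * Real.exp (-t ^ 2 / (2 * v)) := by
  have hint : ∀ a b, IntervalIntegrable (gaussianPDFReal 0 v) volume a b :=
    fun a b => (integrable_gaussianPDFReal 0 v).intervalIntegrable
  have hsymm : ∫ t in -x..0, gaussianPDFReal 0 v t = ∫ t in (0 : ℝ)..x, gaussianPDFReal 0 v t := by
    rw [← neg_zero, ← intervalIntegral.integral_comp_neg, neg_zero]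
    simp [gaussianPDFReal]
  rw [gaussianReal_real_Icc hv (by linarith),
    ← intervalIntegral.integral_add_adjacent_intervals (hint _ 0) (hint _ _), hsymm, ← two_mul,
    ← intervalIntegral.integral_const_mul]
  have hv' : (0 : ℝ) < v := by positivity
  have hc : 2 * (√(2 * Real.pi * v))⁻¹ = √(2 / (Real.pi * v)) := by
    rw [eq_comm, Real.sqrt_eq_iff_mul_self_eq (by positivity) (by positivity)]
    have := Real.mul_self_sqrt (show 0 ≤ 2 * Real.pi * v by positivity)
    field_simp
    nlinarith [this]
  simp only [gaussianPDFReal, sub_zero, ← mul_assoc, hc]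

theorem tendsto_gaussianReal_real_Icc {v : NNReal} (hv : v ≠ 0) {x : ℝ} (hx : 0 ≤ x) :
    Tendsto (fun ε => (gaussianReal 0 v).real (Set.Icc (-x - ε) x)) (𝓝[>] 0)
      (𝓝 ((gaussianReal 0 v).real (Set.Icc (-x) x))) := by
  have hcont : Continuous fun a => ∫ t in x..a, gaussianPDFReal 0 v t :=
    intervalIntegral.continuous_primitive
      (fun a b => (integrable_gaussianPDFReal 0 v).intervalIntegrable) x
  have h : Tendsto (fun ε : ℝ => -∫ t in x..(-x - ε), gaussianPDFReal 0 v t) (𝓝[>] 0)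
      (𝓝 (-∫ t in x..(-x), gaussianPDFReal 0 v t)) := by
    have hc : Continuous fun ε : ℝ => -∫ t in x..(-x - ε), gaussianPDFReal 0 v t :=
      (hcont.comp (by fun_prop : Continuous fun ε : ℝ => -x - ε)).neg
    have h0 := (hc.tendsto 0).mono_left (nhdsWithin_le_nhds (s := Set.Ioi 0))
    rwa [sub_zero] at h0
  rw [gaussianReal_real_Icc hv (by linarith), intervalIntegral.integral_symm]
  refine h.congr' ?_
  filter_upwards [self_mem_nhdsWithin] with ε (hε : 0 < ε)
  rw [gaussianReal_real_Icc hv (by linarith), ← intervalIntegral.integral_symm]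

theorem mem_Icc_floor_iff {x r : ℝ} (hx : 0 ≤ x) (hr : 0 < r) (k : ℤ) :
    (-((⌊x * r⌋₊ : ℤ) + 1) ≤ k ∧ k ≤ (⌊x * r⌋₊ : ℤ)) ↔
      (k : ℝ) / r ∈ Set.Icc (-x - 1 / r) x := by
  have h : -(⌊x * r⌋ + 1) ≤ k ↔ -k - 1 ≤ ⌊x * r⌋ := by omega
  rw [Int.natCast_floor_eq_floor (by positivity), h, Int.le_floor, Int.le_floor, Set.mem_Icc,
    div_le_iff₀ hr, le_div_iff₀ hr, sub_mul, div_mul_cancel₀ _ hr.ne']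
  push_cast
  refine and_congr_left fun _ => ?_
  constructor <;> intro h <;> linarith

/-- **Limit law for the height of Motzkin walks, zero drift**: the height rescaled by
`√n` converges in distribution to the half-normal law `H(σ)` with `σ = √(P″(1)/P(1))`. -/
theorem height_half_normal (pm p0 p1 : ℝ)
    (hpm : 0 < pm) (hp0 : 0 < p0) (hp1 : 0 < p1) (hdrift : p1 = pm) :
    let P1 : ℝ := pm + p0 + p1
    let σ : ℝ := Real.sqrt (2 * pm / P1)
    ∀ x : ℝ, 0 ≤ x →
      Filter.Tendsto
        (fun n : ℕ =>
          (∑ h ∈ Finset.range (⌊x * Real.sqrt n⌋₊ + 1), heightW pm p0 p1 n h) / P1 ^ n)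
        Filter.atTop
        (nhds (∫ t in (0:ℝ)..x,
          Real.sqrt (2 / (Real.pi * σ ^ 2)) * Real.exp (-t ^ 2 / (2 * σ ^ 2)))) := by
  subst hdrift
  intro P1 σ x hx
  have hP : 0 < P1 := by positivity
  let v : NNReal := (2 * p1 / P1).toNNReal
  have hv : (v : ℝ) = 2 * p1 / (p1 + p0 + p1) := Real.coe_toNNReal _ (by positivity)
  have hv0 : v ≠ 0 := by
    rw [← NNReal.coe_ne_zero, hv]
    positivity
  have hσ : σ ^ 2 = v := by
    rw [hv]
    exact Real.sq_sqrt (by positivity)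
  rw [hσ, ← gaussianReal_real_Icc_neg hv0 hx]
  have hs : ∀ n : ℕ, 0 < n → 0 < √(n : ℝ) := fun n hn => Real.sqrt_pos.2 (by exact_mod_cast hn)
  simp only [sum_heightW]
  refine tendsto_order.2 ⟨fun a ha => ?_, fun a ha => ?_⟩
  · filter_upwards [(tendsto_endpointLaw_Icc hp1 hp0.le hv (-x) x).eventually_const_lt ha,
      eventually_gt_atTop 0] with n hn hn0
    refine hn.trans_le ?_
    rw [endpointLaw_real_apply hp1.le hp0.le hp1.le n measurableSet_Icc]
    refine div_le_div_of_nonneg_right (sum_walkWeight_ite_le hp1.le hp0.le hp1.le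
      fun w hw => (mem_Icc_floor_iff hx (hs n hn0) _).2 ⟨?_, hw.2⟩) (by positivity)
    have : 0 ≤ 1 / √(n : ℝ) := by positivity
    linarith [hw.1]
  · obtain ⟨ε, hεa, hε⟩ := (((tendsto_gaussianReal_real_Icc hv0 hx).eventually_lt_const ha).and
      self_mem_nhdsWithin).exists
    have hlim : Tendsto (fun n : ℕ => 1 / √(n : ℝ)) atTop (𝓝 0) :=
      tendsto_const_nhds.div_atTop (Real.tendsto_sqrt_atTop.comp tendsto_natCast_atTop_atTop)
    filter_upwards [(tendsto_endpointLaw_Icc hp1 hp0.le hv (-x - ε) x).eventually_lt_const hεa,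
      eventually_gt_atTop 0, hlim.eventually_lt_const hε] with n hn hn0 hnε
    refine lt_of_le_of_lt ?_ hn
    rw [endpointLaw_real_apply hp1.le hp0.le hp1.le n measurableSet_Icc]
    refine div_le_div_of_nonneg_right (sum_walkWeight_ite_le hp1.le hp0.le hp1.le
      fun w hw => ?_) (by positivity)
    have := (mem_Icc_floor_iff hx (hs n hn0) _).1 hw
    exact ⟨by linarith [this.1], this.2⟩
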